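/- Let f : ℝ → ℝ be continuous and satisfy (f1) and (f2) with constants s₀ > 0, κ₀ > 1. Let λ ≥ 0 and let M, m > 0 satisfy V_λ(M) = V_λ(−m). If M ≥ κ₀ s₀ or m ≥ κ₀ s₀, then min(m, M) ≥ (1/κ₀) · max(m, M). -/

import Mathlib

open Filter Topology Set MeasureTheory

/-- Assumption (f1): `s ↦ f(s)/|s|` is strictly increasing on `ℝ ∖ {0}`, tends to `0`
as `s → 0`, to `+∞` as `s → +∞` and to `−∞` as `s → −∞`. -/
def F1Cond (f : ℝ → ℝ) : Prop :=
  StrictMonoOn (fun s => f s / |s|) {s : ℝ | s ≠ 0} ∧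
  Tendsto (fun s => f s / |s|) (𝓝[≠] (0 : ℝ)) (𝓝 0) ∧
  Tendsto (fun s => f s / |s|) atTop atTop ∧
  Tendsto (fun s => f s / |s|) atBot atBot

/-- The primitive `F(s) = ∫₀ˢ f(t) dt`. -/
noncomputable def Fprim (f : ℝ → ℝ) (s : ℝ) : ℝ := ∫ t in (0 : ℝ)..s, f t

/-- The potential `V_λ(s) = F(s) + (λ/2) s²` of the ODE `−u″ = λu + f(u)`. -/
noncomputable def Vpot (f : ℝ → ℝ) (lambda s : ℝ) : ℝ := Fprim f s + lambda / 2 * s ^ 2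

/-!
By (f1), `f(s)` has the sign of `s`, so `F` is strictly monotone on each half-line. Since `s²` grows
with `|s|`, adding `(λ/2) s²` preserves both this and the comparison (f2), which therefore hold for
`V_λ` as well. If `m ≤ M`, then `V_λ(-M/κ₀) ≤ V_λ(M) = V_λ(-m)` gives `M/κ₀ ≤ m`; if `M ≤ m`, then
`V_λ(m/κ₀) ≤ V_λ(-m) = V_λ(M)` gives `m/κ₀ ≤ M`.
-/

theorem lt_of_strictMonoOn_Ioi_of_tendsto {α β : Type*} [LinearOrder α] [DenselyOrdered α]
    [TopologicalSpace α] [OrderTopology α] [Preorder β] [TopologicalSpace β]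
    [OrderClosedTopology β] {g : α → β} {a s : α} {c : β} (hg : StrictMonoOn g (Ioi a))
    (hc : Tendsto g (𝓝[>] a) (𝓝 c)) (hs : a < s) : c < g s := by
  obtain ⟨t, hat, hts⟩ := exists_between hs
  have : (𝓝[>] a).NeBot := nhdsGT_neBot_of_exists_gt ⟨s, hs⟩
  have hct : c ≤ g t := le_of_tendsto hc <| by
    filter_upwards [Ioo_mem_nhdsGT hat] with x hx using (hg hx.1 hat hx.2).le
  exact hct.trans_lt (hg hat hs hts)

theorem lt_of_strictMonoOn_Iio_of_tendsto {α β : Type*} [LinearOrder α] [DenselyOrdered α]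
    [TopologicalSpace α] [OrderTopology α] [Preorder β] [TopologicalSpace β]
    [OrderClosedTopology β] {g : α → β} {a s : α} {c : β} (hg : StrictMonoOn g (Iio a))
    (hc : Tendsto g (𝓝[<] a) (𝓝 c)) (hs : s < a) : g s < c :=
  lt_of_strictMonoOn_Ioi_of_tendsto (α := αᵒᵈ) (β := βᵒᵈ) hg.dual hc hs

theorem strictMonoOn_intervalIntegral {f : ℝ → ℝ} (hf : LocallyIntegrable f) {D : Set ℝ}
    (hD : D.OrdConnected) (hpos : ∀ x ∈ interior D, 0 < f x) (a : ℝ) :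
    StrictMonoOn (fun x => ∫ t in a..x, f t) D := by
  intro x hx y hy hxy
  have hint (u v : ℝ) : IntervalIntegrable f volume u v :=
    (hf.integrableOn_isCompact isCompact_uIcc).intervalIntegrable
  have hsub : Ioo x y ⊆ interior D :=
    interior_maximal (Ioo_subset_Icc_self.trans (hD.out hx hy)) isOpen_Ioo
  rw [← sub_pos, intervalIntegral.integral_interval_sub_left (hint a y) (hint a x)]
  exact intervalIntegral.intervalIntegral_pos_of_pos_on (hint x y)
    (fun t ht => hpos t (hsub ht)) hxy

theorem strictAntiOn_intervalIntegral {f : ℝ → ℝ} (hf : LocallyIntegrable f) {D : Set ℝ}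
    (hD : D.OrdConnected) (hneg : ∀ x ∈ interior D, f x < 0) (a : ℝ) :
    StrictAntiOn (fun x => ∫ t in a..x, f t) D := by
  have h := strictMonoOn_intervalIntegral hf.neg hD (fun x hx => neg_pos.2 (hneg x hx)) a
  simpa only [Pi.neg_apply, intervalIntegral.integral_neg, neg_neg] using h.neg

/-- `P` and `N` stand for the two branches `s ↦ V (s)` and `s ↦ V (-s)` of a potential `V`. -/
theorem max_le_mul_min_of_comparable {K β : Type*} [Field K] [LinearOrder K]
    [IsStrictOrderedRing K] [Preorder β] {P N : K → β} (hP : StrictMonoOn P (Ici 0))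
    (hN : StrictMonoOn N (Ici 0)) {s₀ κ M m : K} (hs₀ : 0 ≤ s₀) (hκ : 1 ≤ κ)
    (hPN : ∀ s, s₀ ≤ s → P (s / κ) ≤ N s ∧ N s ≤ P (κ * s)) (hM : 0 ≤ M) (hm : 0 ≤ m)
    (h : P M = N m) (hbig : κ * s₀ ≤ M ∨ s₀ ≤ m) :
    max m M ≤ κ * min m M := by
  have hκ_pos : 0 < κ := zero_lt_one.trans_le hκ
  rcases le_total m M with hmM | hMm
  · rw [max_eq_right hmM, min_eq_left hmM]
    rcases le_or_gt (κ * s₀) M with hMbig | hMsmall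
    · have hNP : N (M / κ) ≤ N m := calc
        N (M / κ) ≤ P (κ * (M / κ)) := (hPN _ ((le_div_iff₀' hκ_pos).2 hMbig)).2
        _ = N m := by rw [mul_div_cancel₀ _ hκ_pos.ne', h]
      exact (div_le_iff₀' hκ_pos).1 ((hN.le_iff_le (div_nonneg hM hκ_pos.le) hm).1 hNP)
    · have hmbig : s₀ ≤ m := hbig.resolve_left hMsmall.not_ge
      exact hMsmall.le.trans (mul_le_mul_of_nonneg_left hmbig hκ_pos.le)
  · rw [max_eq_left hMm, min_eq_right hMm]
    have hmbig : s₀ ≤ m :=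
      hbig.elim (fun hMbig => ((le_mul_of_one_le_left hs₀ hκ).trans hMbig).trans hMm) id
    have hPP : P (m / κ) ≤ P M := (hPN m hmbig).1.trans_eq h.symm
    exact (div_le_iff₀' hκ_pos).1 ((hP.le_iff_le (div_nonneg hm hκ_pos.le) hM).1 hPP)

namespace F1Cond

variable {f : ℝ → ℝ} (hf : F1Cond f) {s : ℝ}
include hf

theorem apply_pos (hs : 0 < s) : 0 < f s := by
  have hmono : StrictMonoOn (fun t => f t / |t|) (Ioi 0) := hf.1.mono fun _ ht => ne_of_gt ht
  have hdiv : 0 < f s / |s| :=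
    lt_of_strictMonoOn_Ioi_of_tendsto (g := fun t => f t / |t|) hmono
      (hf.2.1.mono_left (nhdsGT_le_nhdsNE 0)) hs
  exact (div_pos_iff_of_pos_right (abs_pos.2 hs.ne')).1 hdiv

theorem apply_neg (hs : s < 0) : f s < 0 := by
  have hmono : StrictMonoOn (fun t => f t / |t|) (Iio 0) := hf.1.mono fun _ ht => ne_of_lt ht
  have hdiv : f s / |s| < 0 :=
    lt_of_strictMonoOn_Iio_of_tendsto (g := fun t => f t / |t|) hmono
      (hf.2.1.mono_left (nhdsLT_le_nhdsNE 0)) hs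
  rwa [div_lt_iff₀ (abs_pos.2 hs.ne), zero_mul] at hdiv

end F1Cond

section Potential

variable {f : ℝ → ℝ} {lambda a b : ℝ}

theorem Vpot_le_Vpot (hlambda : 0 ≤ lambda) (hF : Fprim f a ≤ Fprim f b) (hab : |a| ≤ |b|) :
    Vpot f lambda a ≤ Vpot f lambda b :=
  add_le_add hF (mul_le_mul_of_nonneg_left (sq_le_sq.2 hab) (div_nonneg hlambda zero_le_two))

theorem Vpot_lt_Vpot (hlambda : 0 ≤ lambda) (hF : Fprim f a < Fprim f b) (hab : |a| ≤ |b|) :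
    Vpot f lambda a < Vpot f lambda b :=
  add_lt_add_of_lt_of_le hF
    (mul_le_mul_of_nonneg_left (sq_le_sq.2 hab) (div_nonneg hlambda zero_le_two))

theorem strictMonoOn_Vpot (hf : LocallyIntegrable f) (hpos : ∀ s, 0 < s → 0 < f s)
    (hlambda : 0 ≤ lambda) : StrictMonoOn (Vpot f lambda) (Ici 0) := by
  have hF : StrictMonoOn (Fprim f) (Ici 0) :=
    strictMonoOn_intervalIntegral hf ordConnected_Ici
      (by simpa only [interior_Ici, mem_Ioi] using hpos) 0
  exact fun a ha b hb hab => Vpot_lt_Vpot hlambda (hF ha hb hab) (abs_le_abs_of_nonneg ha hab.le)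

theorem strictAntiOn_Vpot (hf : LocallyIntegrable f) (hneg : ∀ s, s < 0 → f s < 0)
    (hlambda : 0 ≤ lambda) : StrictAntiOn (Vpot f lambda) (Iic 0) := by
  have hF : StrictAntiOn (Fprim f) (Iic 0) :=
    strictAntiOn_intervalIntegral hf ordConnected_Iic
      (by simpa only [interior_Iic, mem_Iio] using hneg) 0
  exact fun a ha b hb hab => Vpot_lt_Vpot hlambda (hF ha hb hab) (abs_le_abs_of_nonpos hb hab.le)

theorem Vpot_comparable_of_Fprim_comparable {κ s : ℝ} (hlambda : 0 ≤ lambda) (hκ : 1 ≤ κ)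
    (hF : Fprim f (s / κ) ≤ Fprim f (-s) ∧ Fprim f (-s) ≤ Fprim f (κ * s)) :
    Vpot f lambda (s / κ) ≤ Vpot f lambda (-s) ∧ Vpot f lambda (-s) ≤ Vpot f lambda (κ * s) := by
  have hκ_abs : 1 ≤ |κ| := hκ.trans (le_abs_self κ)
  refine ⟨Vpot_le_Vpot hlambda hF.1 ?_, Vpot_le_Vpot hlambda hF.2 ?_⟩
  · rw [abs_div, abs_neg]
    exact div_le_self (abs_nonneg s) hκ_abs
  · rw [abs_neg, abs_mul]
    exact le_mul_of_one_le_left (abs_nonneg s) hκ_abs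

end Potential

theorem comparison_of_max_and_min_general {f : ℝ → ℝ} (hf : LocallyIntegrable f)
    (hpos : ∀ s, 0 < s → 0 < f s) (hneg : ∀ s, s < 0 → f s < 0) {s₀ κ₀ : ℝ} (hs₀ : 0 ≤ s₀)
    (hκ₀ : 1 ≤ κ₀)
    (hf2 : ∀ s, s₀ ≤ s → Fprim f (s / κ₀) ≤ Fprim f (-s) ∧ Fprim f (-s) ≤ Fprim f (κ₀ * s))
    {lambda : ℝ} (hlambda : 0 ≤ lambda) {M m : ℝ} (hM : 0 ≤ M) (hm : 0 ≤ m)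
    (hV : Vpot f lambda M = Vpot f lambda (-m)) (hbig : κ₀ * s₀ ≤ M ∨ s₀ ≤ m) :
    1 / κ₀ * max m M ≤ min m M := by
  have hright : StrictMonoOn (Vpot f lambda) (Ici 0) := strictMonoOn_Vpot hf hpos hlambda
  have hleft : StrictMonoOn (fun s => Vpot f lambda (-s)) (Ici 0) := fun a ha b hb hab =>
    strictAntiOn_Vpot hf hneg hlambda (mem_Iic.2 (neg_nonpos.2 hb)) (mem_Iic.2 (neg_nonpos.2 ha))
      (neg_lt_neg hab)
  rw [one_div, inv_mul_le_iff₀ (zero_lt_one.trans_le hκ₀)]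
  exact max_le_mul_min_of_comparable hright hleft hs₀ hκ₀
    (fun s hs => Vpot_comparable_of_Fprim_comparable hlambda hκ₀ (hf2 s hs)) hM hm hV hbig

/-- Under (f1) and (f2), if `V_λ(M) = V_λ(−m)` with `M, m > 0`, `λ ≥ 0`,
and `M ≥ κ₀ s₀` or `m ≥ κ₀ s₀`, then `min(m, M) ≥ (1/κ₀) max(m, M)`. -/
theorem comparison_of_max_and_min (f : ℝ → ℝ) (hf : Continuous f) (hf1 : F1Cond f)
    (s₀ κ₀ : ℝ) (hs₀ : 0 < s₀) (hκ₀ : 1 < κ₀)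
    (hf2 : ∀ s : ℝ, s₀ ≤ s →
      Fprim f (s / κ₀) ≤ Fprim f (-s) ∧ Fprim f (-s) ≤ Fprim f (κ₀ * s))
    (lambda : ℝ) (hlambda : 0 ≤ lambda) (M m : ℝ) (hM : 0 < M) (hm : 0 < m)
    (hV : Vpot f lambda M = Vpot f lambda (-m))
    (hbig : κ₀ * s₀ ≤ M ∨ κ₀ * s₀ ≤ m) :
    1 / κ₀ * max m M ≤ min m M :=
  comparison_of_max_and_min_general hf.locallyIntegrable (fun _ => hf1.apply_pos)
    (fun _ => hf1.apply_neg) hs₀.le hκ₀.le hf2 hlambda hM.le hm.le hV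
    (hbig.imp_right (le_mul_of_one_le_left hs₀.le hκ₀.le).trans)
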